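/- Let Φ be a derivation in LKp whose last inference is a cut on a formula P, whose left premise Γ ⊢ P, Δ is the conclusion of a right logical rule instance introducing P with premises P₁,…,Pₙ, and whose right premise Γ', P ⊢ Δ' is the conclusion of a left logical rule instance introducing P with premises P_{n+1},…,P_{n+m}. Then there exists a derivation Ψ in LKp of the conclusion Γ, Γ' ⊢ Δ, Δ' whose leaf premises form a subset of {P₁,…,P_{n+m}} and such that δ(Ψ) < δ(Φ). -/

import Mathlib

/-!
The cut on a compound formula `P` is replaced by cuts on its immediate subformulas, whose degrees
are smaller. For `∧`, `∨` and `¬` a single cut between one premise of the right rule and one premise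
of the left rule suffices. For `Q → R`, with premises `Γ, Q ⊢ R, Δ` and `Γ' ⊢ Q, Δ'` and
`Γ', R ⊢ Δ'`, a cut on `R` gives `Γ, Q, Γ' ⊢ Δ, Δ'`, and a further cut on `Q` gives
`Γ', Γ, Γ' ⊢ Δ', Δ, Δ'`.

The order and multiplicity of formulas are repaired by the structural rules, which change neither
the open premises nor the degree: `Reach.mono` shows that both sides of a sequent may be replaced by
lists having at least the same members.
-/

/-!
The system LKp: the propositional fragment of Gentzen's sequent calculus LK.
Sequents are pairs of finite lists of formulas.  In the rules below, a list
written `Γ, P` in the paper is encoded as `Γ ++ [P]` on the left of the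
turnstile and as `P :: Δ` on the right (matching the usual presentation
`Γ ⊢ P, Δ`).
-/

namespace LKp

/-- Classical propositional formulas over countably many atoms. -/
inductive Formula : Type where
  | atom : ℕ → Formula
  | neg  : Formula → Formula
  | and  : Formula → Formula → Formula
  | or   : Formula → Formula → Formula
  | imp  : Formula → Formula → Formula
deriving DecidableEq

/-- A sequent `Γ ⊢ Δ` is a pair of finite lists of formulas. -/
abbrev Sequent := List Formula × List Formula

/-- The degree of a formula: `δ(a) = 1`, `δ(¬P) = 1 + δ(P)`,
`δ(P∧Q) = δ(P∨Q) = δ(P→Q) = 1 + max(δ(P), δ(Q))`. -/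
def Formula.degree : Formula → ℕ
  | .atom _ => 1
  | .neg P => P.degree + 1
  | .and P Q => max P.degree Q.degree + 1
  | .or P Q => max P.degree Q.degree + 1
  | .imp P Q => max P.degree Q.degree + 1

/-- Derivations in LKp: trees of rule instances, with `hyp` marking an open
leaf (a premise of the derivation). -/
inductive Deriv : Sequent → Type where
  | hyp (S : Sequent) : Deriv S
  | ax (P : Formula) : Deriv ([P], [P])
  | permL (Γ Γ' Δ : List Formula) (P Q : Formula) :
      Deriv (Γ ++ P :: Q :: Γ', Δ) → Deriv (Γ ++ Q :: P :: Γ', Δ)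
  | permR (Γ Δ Δ' : List Formula) (P Q : Formula) :
      Deriv (Γ, Δ ++ P :: Q :: Δ') → Deriv (Γ, Δ ++ Q :: P :: Δ')
  | contL (Γ Δ : List Formula) (P : Formula) :
      Deriv (Γ ++ [P, P], Δ) → Deriv (Γ ++ [P], Δ)
  | contR (Γ Δ : List Formula) (Q : Formula) :
      Deriv (Γ, Q :: Q :: Δ) → Deriv (Γ, Q :: Δ)
  | weakL (Γ Δ : List Formula) (P : Formula) :
      Deriv (Γ, Δ) → Deriv (Γ ++ [P], Δ)
  | weakR (Γ Δ : List Formula) (Q : Formula) :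
      Deriv (Γ, Δ) → Deriv (Γ, Q :: Δ)
  | cut (Γ Δ Γ' Δ' : List Formula) (P : Formula) :
      Deriv (Γ, P :: Δ) → Deriv (Γ' ++ [P], Δ') → Deriv (Γ ++ Γ', Δ ++ Δ')
  | andL1 (Γ Δ : List Formula) (P Q : Formula) :
      Deriv (Γ ++ [P], Δ) → Deriv (Γ ++ [P.and Q], Δ)
  | andL2 (Γ Δ : List Formula) (P Q : Formula) :
      Deriv (Γ ++ [Q], Δ) → Deriv (Γ ++ [P.and Q], Δ)
  | andR (Γ Δ : List Formula) (P Q : Formula) :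
      Deriv (Γ, P :: Δ) → Deriv (Γ, Q :: Δ) → Deriv (Γ, (P.and Q) :: Δ)
  | orR1 (Γ Δ : List Formula) (P Q : Formula) :
      Deriv (Γ, P :: Δ) → Deriv (Γ, (P.or Q) :: Δ)
  | orR2 (Γ Δ : List Formula) (P Q : Formula) :
      Deriv (Γ, Q :: Δ) → Deriv (Γ, (P.or Q) :: Δ)
  | orL (Γ Δ : List Formula) (P Q : Formula) :
      Deriv (Γ ++ [P], Δ) → Deriv (Γ ++ [Q], Δ) → Deriv (Γ ++ [P.or Q], Δ)
  | impR (Γ Δ : List Formula) (P Q : Formula) :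
      Deriv (Γ ++ [P], Q :: Δ) → Deriv (Γ, (P.imp Q) :: Δ)
  | impL (Γ Δ : List Formula) (P Q : Formula) :
      Deriv (Γ, P :: Δ) → Deriv (Γ ++ [Q], Δ) → Deriv (Γ ++ [P.imp Q], Δ)
  | negL (Γ Δ : List Formula) (P : Formula) :
      Deriv (Γ, P :: Δ) → Deriv (Γ ++ [P.neg], Δ)
  | negR (Γ Δ : List Formula) (P : Formula) :
      Deriv (Γ ++ [P], Δ) → Deriv (Γ, P.neg :: Δ)

/-- The degree of a derivation: the maximum of the degrees of the cut
formulas occurring in it (`0` if there is no cut). -/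
def Deriv.degree : ∀ {S : Sequent}, Deriv S → ℕ
  | _, .hyp _ => 0
  | _, .ax _ => 0
  | _, .permL _ _ _ _ _ d => Deriv.degree d
  | _, .permR _ _ _ _ _ d => Deriv.degree d
  | _, .contL _ _ _ d => Deriv.degree d
  | _, .contR _ _ _ d => Deriv.degree d
  | _, .weakL _ _ _ d => Deriv.degree d
  | _, .weakR _ _ _ d => Deriv.degree d
  | _, .cut _ _ _ _ P d₁ d₂ => max P.degree (max (Deriv.degree d₁) (Deriv.degree d₂))
  | _, .andL1 _ _ _ _ d => Deriv.degree d
  | _, .andL2 _ _ _ _ d => Deriv.degree d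
  | _, .andR _ _ _ _ d₁ d₂ => max (Deriv.degree d₁) (Deriv.degree d₂)
  | _, .orR1 _ _ _ _ d => Deriv.degree d
  | _, .orR2 _ _ _ _ d => Deriv.degree d
  | _, .orL _ _ _ _ d₁ d₂ => max (Deriv.degree d₁) (Deriv.degree d₂)
  | _, .impR _ _ _ _ d => Deriv.degree d
  | _, .impL _ _ _ _ d₁ d₂ => max (Deriv.degree d₁) (Deriv.degree d₂)
  | _, .negL _ _ _ d => Deriv.degree d
  | _, .negR _ _ _ d => Deriv.degree d

/-- A derivation is a proof when all of its leaves are axiom instances,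
i.e. it has no open hypothesis. -/
def Deriv.isProof : ∀ {S : Sequent}, Deriv S → Prop
  | _, .hyp _ => False
  | _, .ax _ => True
  | _, .permL _ _ _ _ _ d => Deriv.isProof d
  | _, .permR _ _ _ _ _ d => Deriv.isProof d
  | _, .contL _ _ _ d => Deriv.isProof d
  | _, .contR _ _ _ d => Deriv.isProof d
  | _, .weakL _ _ _ d => Deriv.isProof d
  | _, .weakR _ _ _ d => Deriv.isProof d
  | _, .cut _ _ _ _ _ d₁ d₂ => Deriv.isProof d₁ ∧ Deriv.isProof d₂
  | _, .andL1 _ _ _ _ d => Deriv.isProof d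
  | _, .andL2 _ _ _ _ d => Deriv.isProof d
  | _, .andR _ _ _ _ d₁ d₂ => Deriv.isProof d₁ ∧ Deriv.isProof d₂
  | _, .orR1 _ _ _ _ d => Deriv.isProof d
  | _, .orR2 _ _ _ _ d => Deriv.isProof d
  | _, .orL _ _ _ _ d₁ d₂ => Deriv.isProof d₁ ∧ Deriv.isProof d₂
  | _, .impR _ _ _ _ d => Deriv.isProof d
  | _, .impL _ _ _ _ d₁ d₂ => Deriv.isProof d₁ ∧ Deriv.isProof d₂
  | _, .negL _ _ _ d => Deriv.isProof d
  | _, .negR _ _ _ d => Deriv.isProof d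

/-- The list of open premises (hypothesis leaves) of a derivation. -/
def Deriv.prems : ∀ {S : Sequent}, Deriv S → List Sequent
  | _, .hyp S => [S]
  | _, .ax _ => []
  | _, .permL _ _ _ _ _ d => Deriv.prems d
  | _, .permR _ _ _ _ _ d => Deriv.prems d
  | _, .contL _ _ _ d => Deriv.prems d
  | _, .contR _ _ _ d => Deriv.prems d
  | _, .weakL _ _ _ d => Deriv.prems d
  | _, .weakR _ _ _ d => Deriv.prems d
  | _, .cut _ _ _ _ _ d₁ d₂ => Deriv.prems d₁ ++ Deriv.prems d₂
  | _, .andL1 _ _ _ _ d => Deriv.prems d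
  | _, .andL2 _ _ _ _ d => Deriv.prems d
  | _, .andR _ _ _ _ d₁ d₂ => Deriv.prems d₁ ++ Deriv.prems d₂
  | _, .orR1 _ _ _ _ d => Deriv.prems d
  | _, .orR2 _ _ _ _ d => Deriv.prems d
  | _, .orL _ _ _ _ d₁ d₂ => Deriv.prems d₁ ++ Deriv.prems d₂
  | _, .impR _ _ _ _ d => Deriv.prems d
  | _, .impL _ _ _ _ d₁ d₂ => Deriv.prems d₁ ++ Deriv.prems d₂
  | _, .negL _ _ _ d => Deriv.prems d
  | _, .negR _ _ _ d => Deriv.prems d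

/-- A derivation is cut-free when it contains no instance of the cut rule. -/
def Deriv.cutFree : ∀ {S : Sequent}, Deriv S → Prop
  | _, .hyp _ => True
  | _, .ax _ => True
  | _, .permL _ _ _ _ _ d => Deriv.cutFree d
  | _, .permR _ _ _ _ _ d => Deriv.cutFree d
  | _, .contL _ _ _ d => Deriv.cutFree d
  | _, .contR _ _ _ d => Deriv.cutFree d
  | _, .weakL _ _ _ d => Deriv.cutFree d
  | _, .weakR _ _ _ d => Deriv.cutFree d
  | _, .cut _ _ _ _ _ _ _ => False
  | _, .andL1 _ _ _ _ d => Deriv.cutFree d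
  | _, .andL2 _ _ _ _ d => Deriv.cutFree d
  | _, .andR _ _ _ _ d₁ d₂ => Deriv.cutFree d₁ ∧ Deriv.cutFree d₂
  | _, .orR1 _ _ _ _ d => Deriv.cutFree d
  | _, .orR2 _ _ _ _ d => Deriv.cutFree d
  | _, .orL _ _ _ _ d₁ d₂ => Deriv.cutFree d₁ ∧ Deriv.cutFree d₂
  | _, .impR _ _ _ _ d => Deriv.cutFree d
  | _, .impL _ _ _ _ d₁ d₂ => Deriv.cutFree d₁ ∧ Deriv.cutFree d₂
  | _, .negL _ _ _ d => Deriv.cutFree d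
  | _, .negR _ _ _ d => Deriv.cutFree d

end LKp

namespace LKp

/-- A right logical rule instance introducing the formula `P` (on the right of
the turnstile), recorded together with the list of its premise sequents and
its conclusion sequent. -/
inductive RightIntro : Formula → List Sequent → Sequent → Type where
  | andR (Γ Δ : List Formula) (Q R : Formula) :
      RightIntro (Q.and R) [(Γ, Q :: Δ), (Γ, R :: Δ)] (Γ, (Q.and R) :: Δ)
  | orR1 (Γ Δ : List Formula) (Q R : Formula) :
      RightIntro (Q.or R) [(Γ, Q :: Δ)] (Γ, (Q.or R) :: Δ)
  | orR2 (Γ Δ : List Formula) (Q R : Formula) :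
      RightIntro (Q.or R) [(Γ, R :: Δ)] (Γ, (Q.or R) :: Δ)
  | impR (Γ Δ : List Formula) (Q R : Formula) :
      RightIntro (Q.imp R) [(Γ ++ [Q], R :: Δ)] (Γ, (Q.imp R) :: Δ)
  | negR (Γ Δ : List Formula) (Q : Formula) :
      RightIntro Q.neg [(Γ ++ [Q], Δ)] (Γ, Q.neg :: Δ)

/-- A left logical rule instance introducing the formula `P` (on the left of
the turnstile), with its premise sequents and conclusion sequent. -/
inductive LeftIntro : Formula → List Sequent → Sequent → Type where
  | andL1 (Γ Δ : List Formula) (Q R : Formula) :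
      LeftIntro (Q.and R) [(Γ ++ [Q], Δ)] (Γ ++ [Q.and R], Δ)
  | andL2 (Γ Δ : List Formula) (Q R : Formula) :
      LeftIntro (Q.and R) [(Γ ++ [R], Δ)] (Γ ++ [Q.and R], Δ)
  | orL (Γ Δ : List Formula) (Q R : Formula) :
      LeftIntro (Q.or R) [(Γ ++ [Q], Δ), (Γ ++ [R], Δ)] (Γ ++ [Q.or R], Δ)
  | impL (Γ Δ : List Formula) (Q R : Formula) :
      LeftIntro (Q.imp R) [(Γ, Q :: Δ), (Γ ++ [R], Δ)] (Γ ++ [Q.imp R], Δ)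
  | negL (Γ Δ : List Formula) (Q : Formula) :
      LeftIntro Q.neg [(Γ, Q :: Δ)] (Γ ++ [Q.neg], Δ)

/-- The one-step derivation determined by a right logical rule instance:
its premises are open hypothesis leaves. -/
def RightIntro.deriv : ∀ {P ps S}, RightIntro P ps S → Deriv S
  | _, _, _, .andR Γ Δ Q R => .andR Γ Δ Q R (.hyp _) (.hyp _)
  | _, _, _, .orR1 Γ Δ Q R => .orR1 Γ Δ Q R (.hyp _)
  | _, _, _, .orR2 Γ Δ Q R => .orR2 Γ Δ Q R (.hyp _)
  | _, _, _, .impR Γ Δ Q R => .impR Γ Δ Q R (.hyp _)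
  | _, _, _, .negR Γ Δ Q => .negR Γ Δ Q (.hyp _)

/-- The one-step derivation determined by a left logical rule instance:
its premises are open hypothesis leaves. -/
def LeftIntro.deriv : ∀ {P ps S}, LeftIntro P ps S → Deriv S
  | _, _, _, .andL1 Γ Δ Q R => .andL1 Γ Δ Q R (.hyp _)
  | _, _, _, .andL2 Γ Δ Q R => .andL2 Γ Δ Q R (.hyp _)
  | _, _, _, .orL Γ Δ Q R => .orL Γ Δ Q R (.hyp _) (.hyp _)
  | _, _, _, .impL Γ Δ Q R => .impL Γ Δ Q R (.hyp _) (.hyp _)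
  | _, _, _, .negL Γ Δ Q => .negL Γ Δ Q (.hyp _)

/-- `Reach H n Γ Δ`: the sequent `Γ ⊢ Δ` has a derivation with open premises among `H` and all of
whose cuts have degree less than `n`, the degree of a cut-free derivation being `0`. -/
def Reach (H : List Sequent) (n : ℕ) (Γ Δ : List Formula) : Prop :=
  ∃ Ψ : Deriv (Γ, Δ), Ψ.prems ⊆ H ∧ Ψ.degree < n

lemma Reach.hyp {H : List Sequent} {n : ℕ} (hn : 0 < n) {Γ Δ : List Formula}
    (h : (Γ, Δ) ∈ H) : Reach H n Γ Δ :=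
  ⟨.hyp _, by simpa [Deriv.prems] using h, by simpa [Deriv.degree] using hn⟩

lemma Reach.cut {H : List Sequent} {n : ℕ} {Γ Δ Γ' Δ' : List Formula} {P : Formula}
    (hP : P.degree < n) (h₁ : Reach H n Γ (P :: Δ)) (h₂ : Reach H n (Γ' ++ [P]) Δ') :
    Reach H n (Γ ++ Γ') (Δ ++ Δ') := by
  obtain ⟨d₁, p₁, e₁⟩ := h₁
  obtain ⟨d₂, p₂, e₂⟩ := h₂
  refine ⟨.cut _ _ _ _ P d₁ d₂, ?_, ?_⟩
  · simpa [Deriv.prems] using ⟨p₁, p₂⟩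
  · simpa [Deriv.degree] using ⟨hP, e₁, e₂⟩

/-- Permutation on the left. The prefix `Θ` makes the induction on `List.Perm` go through, since the
exchange rule acts at any position. -/
lemma Reach.permL {H : List Sequent} {n : ℕ} {Γ Γ' Δ : List Formula} (h : Γ.Perm Γ') :
    ∀ Θ : List Formula, Reach H n (Θ ++ Γ) Δ → Reach H n (Θ ++ Γ') Δ := by
  induction h with
  | nil => exact fun _ h => h
  | cons x _ ih => intro Θ h; simpa using ih (Θ ++ [x]) (by simpa using h)
  | swap x y l => rintro Θ ⟨d, p, e⟩; exact ⟨.permL _ _ _ _ _ d, p, e⟩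
  | trans _ _ ih₁ ih₂ => exact fun Θ h => ih₂ Θ (ih₁ Θ h)

/-- Permutation on the right, with a prefix as in `Reach.permL`. -/
lemma Reach.permR {H : List Sequent} {n : ℕ} {Γ Δ Δ' : List Formula} (h : Δ.Perm Δ') :
    ∀ Θ : List Formula, Reach H n Γ (Θ ++ Δ) → Reach H n Γ (Θ ++ Δ') := by
  induction h with
  | nil => exact fun _ h => h
  | cons x _ ih => intro Θ h; simpa using ih (Θ ++ [x]) (by simpa using h)
  | swap x y l => rintro Θ ⟨d, p, e⟩; exact ⟨.permR _ _ _ _ _ d, p, e⟩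
  | trans _ _ ih₁ ih₂ => exact fun Θ h => ih₂ Θ (ih₁ Θ h)

lemma Reach.perm {H : List Sequent} {n : ℕ} {Γ Γ' Δ Δ' : List Formula} (h : Reach H n Γ Δ)
    (hΓ : Γ.Perm Γ') (hΔ : Δ.Perm Δ') : Reach H n Γ' Δ' :=
  Reach.permR hΔ [] (Reach.permL hΓ [] h)

lemma Reach.weakL {H : List Sequent} {n : ℕ} {Γ Δ : List Formula} (h : Reach H n Γ Δ)
    (Θ : List Formula) : Reach H n (Θ ++ Γ) Δ := by
  induction Θ with
  | nil => exact h
  | cons x Θ ih =>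
    obtain ⟨d, p, e⟩ := ih
    have : Reach H n (Θ ++ Γ ++ [x]) Δ := ⟨.weakL _ _ x d, p, e⟩
    exact this.perm (List.perm_append_singleton x _) (.refl _)

lemma Reach.weakR {H : List Sequent} {n : ℕ} {Γ Δ : List Formula} (h : Reach H n Γ Δ)
    (Θ : List Formula) : Reach H n Γ (Θ ++ Δ) := by
  induction Θ with
  | nil => exact h
  | cons x Θ ih =>
    obtain ⟨d, p, e⟩ := ih
    exact ⟨.weakR _ _ x d, p, e⟩

lemma Reach.contL {H : List Sequent} {n : ℕ} {Γ Δ : List Formula} {x : Formula} (hx : x ∈ Γ)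
    (h : Reach H n (x :: Γ) Δ) : Reach H n Γ Δ := by
  have hp := List.perm_cons_erase hx
  have h' : Reach H n (Γ.erase x ++ [x, x]) Δ :=
    h.perm ((hp.cons x).trans (List.perm_append_comm (l₁ := [x, x]))) (.refl _)
  obtain ⟨d, p, e⟩ := h'
  have : Reach H n (Γ.erase x ++ [x]) Δ := ⟨.contL _ _ x d, p, e⟩
  exact this.perm ((List.perm_append_singleton x _).trans hp.symm) (.refl _)

lemma Reach.contR {H : List Sequent} {n : ℕ} {Γ Δ : List Formula} {x : Formula} (hx : x ∈ Δ)
    (h : Reach H n Γ (x :: Δ)) : Reach H n Γ Δ := by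
  have hp := List.perm_cons_erase hx
  obtain ⟨d, p, e⟩ := h.perm (.refl _) (hp.cons x)
  have : Reach H n Γ (x :: Δ.erase x) := ⟨.contR _ _ x d, p, e⟩
  exact this.perm (.refl _) hp.symm

lemma Reach.contL_append {H : List Sequent} {n : ℕ} {Γ Δ : List Formula} :
    ∀ {Θ : List Formula}, Θ ⊆ Γ → Reach H n (Θ ++ Γ) Δ → Reach H n Γ Δ
  | [], _, h => h
  | x :: Θ, hs, h =>
    Reach.contL_append (fun _ hy => hs (List.mem_cons_of_mem x hy))
      (Reach.contL (List.mem_append_right Θ (hs List.mem_cons_self)) h)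

lemma Reach.contR_append {H : List Sequent} {n : ℕ} {Γ Δ : List Formula} :
    ∀ {Θ : List Formula}, Θ ⊆ Δ → Reach H n Γ (Θ ++ Δ) → Reach H n Γ Δ
  | [], _, h => h
  | x :: Θ, hs, h =>
    Reach.contR_append (fun _ hy => hs (List.mem_cons_of_mem x hy))
      (Reach.contR (List.mem_append_right Θ (hs List.mem_cons_self)) h)

/-- The structural rules combined: only inclusion of the sets of members matters. The new lists are
added by weakening, after which the old ones are absorbed by contraction. -/
lemma Reach.mono {H : List Sequent} {n : ℕ} {Γ Γ' Δ Δ' : List Formula} (h : Reach H n Γ Δ)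
    (hΓ : Γ ⊆ Γ') (hΔ : Δ ⊆ Δ') : Reach H n Γ' Δ' :=
  Reach.contL_append hΓ (Reach.contR_append hΔ
    (((h.weakL Γ').weakR Δ').perm List.perm_append_comm List.perm_append_comm))

/-- The cut reduction, with the degree compared to that of the cut formula itself. The conclusion of
the left rule is a variable `S`, so that case analysis need not unify `Γ' ++ [P]` with another
append. -/
lemma reach_of_intro {P : Formula} {Γ Δ Γ' Δ' : List Formula} {ps₁ ps₂ : List Sequent}
    {S : Sequent} (r : RightIntro P ps₁ (Γ, P :: Δ)) (l : LeftIntro P ps₂ S)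
    (hS : S = (Γ' ++ [P], Δ')) :
    Reach (ps₁ ++ ps₂) P.degree (Γ ++ Γ') (Δ ++ Δ') := by
  cases r <;> cases l <;>
    (simp only [Prod.mk.injEq, List.append_left_inj] at hS
     obtain ⟨rfl, rfl⟩ := hS
     simp only [Formula.degree])
  case andR.andL1 Q R Γ' Δ' =>
    exact Reach.cut (P := Q) (by omega) (.hyp (by omega) (by simp)) (.hyp (by omega) (by simp))
  case andR.andL2 Q R Γ' Δ' =>
    exact Reach.cut (P := R) (by omega) (.hyp (by omega) (by simp)) (.hyp (by omega) (by simp))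
  case orR1.orL Q R Γ' Δ' =>
    exact Reach.cut (P := Q) (by omega) (.hyp (by omega) (by simp)) (.hyp (by omega) (by simp))
  case orR2.orL Q R Γ' Δ' =>
    exact Reach.cut (P := R) (by omega) (.hyp (by omega) (by simp)) (.hyp (by omega) (by simp))
  case impR.impL Q R Γ' Δ' =>
    have hR : Reach ([(Γ ++ [Q], R :: Δ)] ++ [(Γ', Q :: Δ'), (Γ' ++ [R], Δ')])
        (max Q.degree R.degree + 1) (Γ ++ [Q] ++ Γ') (Δ ++ Δ') :=
      Reach.cut (P := R) (by omega) (.hyp (by omega) (by simp)) (.hyp (by omega) (by simp))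
    have hR' := hR.mono (Γ' := Γ ++ Γ' ++ [Q]) (by intro x; simp; tauto) (List.Subset.refl _)
    have hQ := Reach.cut (P := Q) (Γ := Γ') (Δ := Δ') (by omega)
      (.hyp (by omega) (by simp)) hR'
    exact hQ.mono (by intro x; simp; tauto) (by intro x; simp; tauto)
  -- The negation rules switch sides, so the left rule supplies the left premise of the new cut.
  case negR.negL Q Γ' Δ' =>
    have hQ : Reach ([(Γ ++ [Q], Δ)] ++ [(Γ', Q :: Δ')]) (Q.degree + 1) (Γ' ++ Γ) (Δ' ++ Δ) :=
      Reach.cut (P := Q) (by omega) (.hyp (by omega) (by simp)) (.hyp (by omega) (by simp))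
    exact hQ.perm List.perm_append_comm List.perm_append_comm

/-- Lemma 1 of the cut-elimination argument.
Let `Φ` be the derivation whose last inference is a cut on `P`, whose left
premise `Γ ⊢ P, Δ` is the conclusion of a right logical rule instance `r`
introducing `P` with premises `ps₁`, and whose right premise `Γ', P ⊢ Δ'` is
the conclusion of a left logical rule instance `l` introducing `P` with
premises `ps₂`.  Then there is a derivation `Ψ` of `Γ, Γ' ⊢ Δ, Δ'` whose open
premises form a subset of `ps₁ ++ ps₂` and with `δ(Ψ) < δ(Φ)`. -/
theorem key_cut_lemma (P : Formula) (Γ Δ Γ' Δ' : List Formula)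
    (ps₁ ps₂ : List Sequent)
    (r : RightIntro P ps₁ (Γ, P :: Δ))
    (l : LeftIntro P ps₂ (Γ' ++ [P], Δ')) :
    ∃ Ψ : Deriv (Γ ++ Γ', Δ ++ Δ'),
      Ψ.prems ⊆ ps₁ ++ ps₂ ∧
      Ψ.degree < (Deriv.cut Γ Δ Γ' Δ' P r.deriv l.deriv).degree := by
  obtain ⟨Ψ, hp, hd⟩ := reach_of_intro r l rfl
  exact ⟨Ψ, hp, lt_of_lt_of_le hd (le_max_left _ _)⟩

end LKp
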